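/- Let B be a finite-dimensional vector space over a field K of characteristic zero equipped with a skew-symmetric bilinear product [·,·]_B, let B* be its dual, define ad*(b)(β) = −β([b,·]_B), and let w : B × B → B* be a bilinear map. Define on B ⊕ B* the product [b+β, b'+β'] = [b,b']_B + w(b,b') + ad*(b)(β') − ad*(b')(β). Then this product makes B ⊕ B* a Lie algebra (i.e. it is skew-symmetric and satisfies the Jacobi identity) if and only if [·,·]_B makes B a Lie algebra and w is a 2-cocycle, i.e. w is skew-symmetric and w([a,b]_B,c) + w([b,c]_B,a) + w([c,a]_B,b) = ad*(a)(w(b,c)) + ad*(b)(w(c,a)) + ad*(c)(w(a,b)) for all a,b,c ∈ B. -/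

import Mathlib

open Module

variable {K B : Type*}

/-- The product `[b+β, b'+β'] = [b,b']_B + w(b,b') + ad*(b)(β') − ad*(b')(β)` on
`B ⊕ B*`, where `ad*(b)(β) = −β ∘ [b,·]_B` is the coadjoint action relative to the
bilinear product `m` on `B`. -/
def tStarBr [Field K] [AddCommGroup B] [Module K B]
    (m : B →ₗ[K] B →ₗ[K] B) (w : B →ₗ[K] B →ₗ[K] Module.Dual K B)
    (X Y : B × Module.Dual K B) : B × Module.Dual K B :=
  (m X.1 Y.1, w X.1 Y.1 + (-(Y.2 ∘ₗ m X.1)) - (-(X.2 ∘ₗ m Y.1)))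

/-- For a skew-symmetric bilinear product `[·,·]_B = m` on a finite-dimensional vector
space `B` and a bilinear map `w : B × B → B*`, the product
`[b+β, b'+β'] = [b,b']_B + w(b,b') + ad*(b)(β') − ad*(b')(β)` makes `B ⊕ B*` a Lie
algebra (skew-symmetric and Jacobi) if and only if `m` makes `B` a Lie algebra and `w`
is a 2-cocycle. -/
theorem stmt6 [Field K] [CharZero K] [AddCommGroup B] [Module K B] [FiniteDimensional K B]
    (m : B →ₗ[K] B →ₗ[K] B) (hmskew : ∀ x y : B, m x y = - m y x)
    (w : B →ₗ[K] B →ₗ[K] Module.Dual K B) :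
    ((∀ X Y : B × Module.Dual K B, tStarBr m w X Y = - tStarBr m w Y X) ∧
     (∀ X Y Z : B × Module.Dual K B,
        tStarBr m w X (tStarBr m w Y Z) + tStarBr m w Y (tStarBr m w Z X) +
          tStarBr m w Z (tStarBr m w X Y) = 0))
    ↔
    ((∀ a b c : B, m a (m b c) + m b (m c a) + m c (m a b) = 0) ∧
     (∀ a b : B, w a b = - w b a) ∧
     (∀ a b c : B, w (m a b) c + w (m b c) a + w (m c a) b =
        -((w b c) ∘ₗ m a) + -((w c a) ∘ₗ m b) + -((w a b) ∘ₗ m c))) := by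
  constructor
  · rintro ⟨hs, hJ⟩
    have hw : ∀ a b : B, w a b = - w b a := by
      intro a b
      have h := congrArg Prod.snd (hs (a, 0) (b, 0))
      simpa [tStarBr] using h
    refine ⟨?_, hw, ?_⟩
    · intro a b c
      have h := congrArg Prod.fst (hJ (a, 0) (b, 0) (c, 0))
      simpa [tStarBr] using h
    · intro a b c
      have h := congrArg Prod.snd (hJ (a, 0) (b, 0) (c, 0))
      ext x
      have hx := LinearMap.congr_fun h x
      simp [tStarBr] at hx
      have h1 := LinearMap.congr_fun (hw a (m b c)) x
      have h2 := LinearMap.congr_fun (hw b (m c a)) x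
      have h3 := LinearMap.congr_fun (hw c (m a b)) x
      simp at h1 h2 h3 ⊢
      linear_combination -hx + h1 + h2 + h3
  · rintro ⟨hJ, hw, hc⟩
    constructor
    · rintro ⟨a, α⟩ ⟨b, β⟩
      refine Prod.ext (hmskew a b) ?_
      ext x
      have h1 := LinearMap.congr_fun (hw a b) x
      simp [tStarBr] at h1 ⊢
      linear_combination h1
    · rintro ⟨a, α⟩ ⟨b, β⟩ ⟨c, γ⟩
      have key : ∀ (f : Module.Dual K B) (a b x : B),
          f (m b (m a x)) - f (m a (m b x)) + f (m (m a b) x) = 0 := by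
        intro f a b x
        have h := congrArg f (hJ a b x)
        rw [hmskew x a, hmskew x (m a b)] at h
        simp at h
        linear_combination -h
      refine Prod.ext (hJ a b c) ?_
      ext x
      have h1 := LinearMap.congr_fun (hw a (m b c)) x
      have h2 := LinearMap.congr_fun (hw b (m c a)) x
      have h3 := LinearMap.congr_fun (hw c (m a b)) x
      have h4 := LinearMap.congr_fun (hc a b c) x
      have k1 := key γ a b x
      have k2 := key α b c x
      have k3 := key β c a x
      simp [tStarBr] at h1 h2 h3 h4 ⊢
      linear_combination h1 + h2 + h3 - h4 + k1 + k2 + k3
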